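/- The right star order on M_n(ℂ), defined by A ≤⋆ B if and only if A·A* = B·A* and the column space (range) of A* is contained in the column space of B*, is a partial order: it is reflexive, antisymmetric, and transitive. -/

import Mathlib

open Matrix

theorem exists_factor_of_range_le {n : ℕ} {P Q : Matrix (Fin n) (Fin n) ℂ}
    (h : LinearMap.range P.mulVecLin ≤ LinearMap.range Q.mulVecLin) :
    ∃ X : Matrix (Fin n) (Fin n) ℂ, P = Q * X := by
  have h' : ∀ j : Fin n, ∃ x, Q.mulVecLin x = P.mulVecLin (Pi.single j 1) :=
    fun j => h ⟨_, rfl⟩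
  choose x hx using h'
  refine ⟨Matrix.of (fun i j => x j i), ?_⟩
  ext i j
  have := congrFun (hx j) i
  simp only [Matrix.mulVecLin_apply, Matrix.mulVec_single_one] at this
  exact this.symm

/-- The right star order on `M_n(ℂ)` is a partial order. -/
theorem right_star_order_partialOrder (n : ℕ) :
    Reflexive (fun A B : Matrix (Fin n) (Fin n) ℂ =>
      A * Aᴴ = B * Aᴴ ∧
        LinearMap.range Aᴴ.mulVecLin ≤ LinearMap.range Bᴴ.mulVecLin) ∧
    AntiSymmetric (fun A B : Matrix (Fin n) (Fin n) ℂ =>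
      A * Aᴴ = B * Aᴴ ∧
        LinearMap.range Aᴴ.mulVecLin ≤ LinearMap.range Bᴴ.mulVecLin) ∧
    Transitive (fun A B : Matrix (Fin n) (Fin n) ℂ =>
      A * Aᴴ = B * Aᴴ ∧
        LinearMap.range Aᴴ.mulVecLin ≤ LinearMap.range Bᴴ.mulVecLin) := by
  refine ⟨fun A => ⟨rfl, le_rfl⟩, ?_, ?_⟩
  · rintro A B ⟨h1, -⟩ ⟨h2, -⟩
    have h : (A - B) * (A - B)ᴴ = 0 := by
      rw [Matrix.conjTranspose_sub, Matrix.sub_mul, Matrix.mul_sub, Matrix.mul_sub, h1, h2]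
      abel
    open scoped ComplexOrder in
    exact sub_eq_zero.mp (Matrix.self_mul_conjTranspose_eq_zero.mp h)
  · rintro A B C ⟨h1, r1⟩ ⟨h2, r2⟩
    refine ⟨?_, r1.trans r2⟩
    obtain ⟨X, hX⟩ := exists_factor_of_range_le r1
    rw [h1, hX, ← Matrix.mul_assoc, h2, Matrix.mul_assoc]
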